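/- Let P be a normal logic program over its finite set of atoms 𝒜_P, and let S be the final true set T^∞ of a successful DProp computation on P. Then S is a stable model of P. -/

import Mathlib

/-- A rule of a normal logic program: head atom, positive body atoms, default-negated body atoms. -/
structure Rule (α : Type) where
  head : α
  pos : Finset α
  neg : Finset α

/-- The immediate consequence operator `C_{P,J}(I)`. -/
def imCons {α : Type} (P : Set (Rule α)) (J I : Set α) : Set α :=
  { a | ∃ r ∈ P, r.head = a ∧ ↑r.pos ⊆ I ∧ ∀ b ∈ r.neg, b ∉ J }

lemma imCons_mono {α : Type} (P : Set (Rule α)) (J : Set α) : Monotone (imCons P J) := by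
  rintro I I' h a ⟨r, hr, hh, hp, hn⟩
  exact ⟨r, hr, hh, fun x hx => h (hp hx), hn⟩

/-- `C_{P,J}^∞(I)`: the least fixpoint of `C_{P,J}` above `I`, obtained by iterating from `I`. -/
def imConsInf {α : Type} (P : Set (Rule α)) (J I : Set α) : Set α :=
  OrderHom.lfp ⟨fun X => I ∪ imCons P J X,
    fun _ _ h => Set.union_subset_union (le_refl I) (imCons_mono P J h)⟩

/-- The Gelfond–Lifschitz reduct `P^S`. -/
def reduct {α : Type} (P : Set (Rule α)) (S : Set α) : Set (Rule α) :=
  { r' | ∃ r ∈ P, (∀ b ∈ r.neg, b ∉ S) ∧ r' = ⟨r.head, r.pos, ∅⟩ }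

/-- `M` is a model of the program `P`. -/
def isModel {α : Type} (P : Set (Rule α)) (M : Set α) : Prop :=
  ∀ r ∈ P, ↑r.pos ⊆ M → (∀ b ∈ r.neg, b ∉ M) → r.head ∈ M

/-- `S` is a stable model of `P`: `S` is the least model of the reduct `P^S`. -/
def isStableModel {α : Type} (P : Set (Rule α)) (S : Set α) : Prop :=
  isModel (reduct P S) S ∧ ∀ M : Set α, isModel (reduct P S) M → S ⊆ M

/-!
Since `C_{P,J}` is antitone in `J`, the closure `C_{P,J'}^∞` absorbs any earlier closure
`C_{P,J}^∞` with `J' ⊆ J`. The false sets of a run only grow, so its true sets collapse to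
`T^k = C_{P,𝒜∖F^k}^∞(∅)`: the history of the run is irrelevant. At the end of a successful
computation `𝒜 ∖ F^∞ = T^∞`, whence `T^∞ = C_{P,T^∞}^∞(∅)`, and the fixpoints of
`S ↦ C_{P,S}^∞(∅)` are exactly the stable models.
-/

section Consequence

variable {α : Type} {P : Set (Rule α)} {I J J' M S : Set α}

lemma imCons_anti (h : J' ⊆ J) : imCons P J I ⊆ imCons P J' I := by
  rintro a ⟨r, hr, hhead, hpos, hneg⟩
  exact ⟨r, hr, hhead, hpos, fun b hb hbJ' => hneg b hb (h hbJ')⟩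

lemma union_imCons_imConsInf : I ∪ imCons P J (imConsInf P J I) = imConsInf P J I :=
  OrderHom.map_lfp ⟨fun X => I ∪ imCons P J X,
    fun _ _ h => Set.union_subset_union_right I (imCons_mono P J h)⟩

lemma subset_imConsInf : I ⊆ imConsInf P J I :=
  Set.subset_union_left.trans union_imCons_imConsInf.subset

lemma imCons_imConsInf_subset : imCons P J (imConsInf P J I) ⊆ imConsInf P J I :=
  Set.subset_union_right.trans union_imCons_imConsInf.subset

lemma imConsInf_subset (hI : I ⊆ M) (hM : imCons P J M ⊆ M) : imConsInf P J I ⊆ M :=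
  OrderHom.lfp_le _ (Set.union_subset hI hM)

lemma imConsInf_imConsInf_of_subset (h : J' ⊆ J) :
    imConsInf P J' (imConsInf P J I) = imConsInf P J' I := by
  have inner_subset : imConsInf P J I ⊆ imConsInf P J' I :=
    imConsInf_subset subset_imConsInf ((imCons_anti h).trans imCons_imConsInf_subset)
  apply Set.Subset.antisymm
  · exact imConsInf_subset inner_subset imCons_imConsInf_subset
  · exact imConsInf_subset (subset_imConsInf.trans subset_imConsInf) imCons_imConsInf_subset

lemma isModel_reduct_iff : isModel (reduct P S) M ↔ imCons P S M ⊆ M := by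
  constructor
  · rintro hM _ ⟨r, hr, rfl, hpos, hneg⟩
    exact hM ⟨r.head, r.pos, ∅⟩ ⟨r, hr, hneg, rfl⟩ hpos
      fun b hb => absurd hb (Finset.notMem_empty b)
  · rintro hM _ ⟨r, hr, hneg, rfl⟩ hpos -
    exact hM ⟨r, hr, rfl, hpos, hneg⟩

lemma isStableModel_iff_imConsInf_eq : isStableModel P S ↔ imConsInf P S ∅ = S := by
  simp only [isStableModel, isModel_reduct_iff]
  constructor
  · rintro ⟨hS, hleast⟩
    exact (imConsInf_subset S.empty_subset hS).antisymm (hleast _ imCons_imConsInf_subset)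
  · intro hS
    refine ⟨?_, fun M hM => ?_⟩
    · simpa only [hS] using imCons_imConsInf_subset (P := P) (J := S) (I := ∅)
    · exact hS.symm.subset.trans (imConsInf_subset M.empty_subset hM)

end Consequence

/-- A DProp run of length `m` with true sets `T`, false sets `F` and undecided sets `U`, relaxed so
that `F 0` is arbitrary and a decision step may add any set of atoms to the false set instead of a
single undecided atom. -/
structure IsRelaxedDPropRun {α : Type} (P : Set (Rule α)) (m : ℕ) (T F U : ℕ → Set α) : Prop where
  true_zero : T 0 = imConsInf P (Set.univ \ F 0) ∅
  undecided_zero : U 0 = Set.univ \ (T 0 ∪ F 0)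
  false_subset_succ : ∀ k < m, F k ⊆ F (k + 1)
  true_succ : ∀ k < m, T (k + 1) = imConsInf P (Set.univ \ F (k + 1)) (T k)
  undecided_succ : ∀ k < m, U (k + 1) = U k \ (T (k + 1) ∪ F (k + 1))

namespace IsRelaxedDPropRun

variable {α : Type} {P : Set (Rule α)} {m k : ℕ} {T F U : ℕ → Set α}

lemma true_subset_succ (run : IsRelaxedDPropRun P m T F U) (hk : k < m) : T k ⊆ T (k + 1) :=
  subset_imConsInf.trans (run.true_succ k hk).symm.subset

lemma true_eq_imConsInf_empty (run : IsRelaxedDPropRun P m T F U) (hk : k ≤ m) :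
    T k = imConsInf P (Set.univ \ F k) ∅ := by
  induction k with
  | zero => exact run.true_zero
  | succ k ih =>
    have blocked_anti : Set.univ \ F (k + 1) ⊆ Set.univ \ F k :=
      Set.sdiff_subset_sdiff_right (run.false_subset_succ k hk)
    rw [run.true_succ k hk, ih (Nat.le_of_succ_le hk), imConsInf_imConsInf_of_subset blocked_anti]

lemma undecided_eq (run : IsRelaxedDPropRun P m T F U) (hk : k ≤ m) :
    U k = Set.univ \ (T k ∪ F k) := by
  induction k with
  | zero => exact run.undecided_zero
  | succ k ih =>
    have decided_subset : T k ∪ F k ⊆ T (k + 1) ∪ F (k + 1) :=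
      Set.union_subset_union (run.true_subset_succ hk) (run.false_subset_succ k hk)
    rw [run.undecided_succ k hk, ih (Nat.le_of_succ_le hk), Set.sdiff_sdiff,
      Set.union_eq_self_of_subset_left decided_subset]

lemma isCompl_of_undecided_eq_empty (run : IsRelaxedDPropRun P m T F U) (hdone : U m = ∅)
    (hfree : T m ∩ F m = ∅) : IsCompl (T m) (F m) := by
  refine ⟨Set.disjoint_iff_inter_eq_empty.mpr hfree, codisjoint_iff.mpr ?_⟩
  rwa [run.undecided_eq le_rfl, Set.sdiff_eq_empty, Set.univ_subset_iff] at hdone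

end IsRelaxedDPropRun

theorem successful_dprop_run_yields_stable_model_general {α : Type} {P : Set (Rule α)} {m : ℕ}
    {T F U : ℕ → Set α} (run : IsRelaxedDPropRun P m T F U) (hdone : U m = ∅)
    (hfree : T m ∩ F m = ∅) : isStableModel P (T m) := by
  have univ_sdiff_false : Set.univ \ F m = T m := by
    rw [← Set.compl_eq_univ_sdiff, (run.isCompl_of_undecided_eq_empty hdone hfree).symm.compl_eq]
  have true_eq := run.true_eq_imConsInf_empty le_rfl
  rw [univ_sdiff_false] at true_eq
  exact isStableModel_iff_imConsInf_eq.mpr true_eq.symm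

/-- The final true set of a successful DProp computation is a stable
model of `P`. -/
theorem successful_dprop_run_yields_stable_model {α : Type} [Fintype α]
    (P : Set (Rule α)) (m : ℕ) (T F U : ℕ → Set α)
    (hT0 : T 0 = imConsInf P Set.univ ∅)
    (hF0 : F 0 = (∅ : Set α))
    (hU0 : U 0 = Set.univ \ (T 0 ∪ F 0))
    (hdec : ∀ k, 1 ≤ k → k ≤ m → ∃ a ∈ U (k - 1), F k = F (k - 1) ∪ {a})
    (hprop : ∀ k, 1 ≤ k → k ≤ m → T k = imConsInf P (Set.univ \ F k) (T (k - 1)))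
    (hupd : ∀ k, 1 ≤ k → k ≤ m → U k = U (k - 1) \ (T k ∪ F k))
    (hdone : U m = ∅)
    (hfree : T m ∩ F m = ∅) :
    isStableModel P (T m) := by
  have true_zero : T 0 = imConsInf P (Set.univ \ F 0) ∅ := by rw [hT0, hF0, Set.sdiff_empty]
  have false_subset_succ : ∀ k < m, F k ⊆ F (k + 1) := fun k hk =>
    (hdec (k + 1) k.succ_pos hk).elim fun _ h => h.2 ▸ Set.subset_union_left
  exact successful_dprop_run_yields_stable_model_general
    ⟨true_zero, hU0, false_subset_succ, fun k => hprop (k + 1) k.succ_pos,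
      fun k => hupd (k + 1) k.succ_pos⟩ hdone hfree
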